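/- Let F_1, ..., F_l be families of real-valued functions on X and let G = { x ↦ max(h_1(x), ..., h_l(x)) : h_i ∈ F_i for each i }. Then for any sample S = (x_1, ..., x_m), the empirical Rademacher complexity satisfies R_S(G) ≤ Σ_{j=1}^l R_S(F_j). The same bound holds when max is replaced by min. -/

import Mathlib

open Finset

/-- Empirical Rademacher complexity of a family `F` of real-valued functions with
respect to the sample `S = (x_1, ..., x_m)`:
`R_S(F) = (1/m) E_σ [ sup_{f ∈ F} Σ_i σ_i f(x_i) ]`, the expectation over the
`2^m` equally likely sign vectors written as an average. -/
noncomputable def empRad {X : Type*} {m : ℕ} (S : Fin m → X) (F : Set (X → ℝ)) : ℝ :=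
  (∑ σ : Fin m → Bool,
      sSup ((fun f => ∑ i, (if σ i then (1 : ℝ) else -1) * f (S i)) '' F)) / (2 ^ m * m)

lemma sum_cons_bool {m : ℕ} (f : (Fin (m + 1) → Bool) → ℝ) :
    ∑ σ, f σ = ∑ τ : Fin m → Bool, (f (Fin.cons true τ) + f (Fin.cons false τ)) := by
  rw [← (Fin.consEquiv (fun _ : Fin (m + 1) => Bool)).sum_comp, Fintype.sum_prod_type_right]
  refine Finset.sum_congr rfl fun τ _ => ?_
  simp [Fin.consEquiv]

/-- Contraction principle, in terms of selections rather than suprema. -/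
lemma contraction {T : Type*} (m : ℕ) : ∀ (c : T → ℝ) (u v : T → Fin m → ℝ)
    (_ : ∀ t t' i, u t i - u t' i ≤ |v t i - v t' i|) (t : (Fin m → Bool) → T),
    ∃ s : (Fin m → Bool) → T,
      ∑ σ, (c (t σ) + ∑ i, (if σ i then (1 : ℝ) else -1) * u (t σ) i) ≤
      ∑ σ, (c (s σ) + ∑ i, (if σ i then (1 : ℝ) else -1) * v (s σ) i) := by
  induction m with
  | zero => intro c u v _ t; exact ⟨t, by simp⟩
  | succ m ih =>
    intro c u v huv t
    have h1 : ∀ τ : Fin m → Bool, ∃ p : T × T,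
        (c (t (Fin.cons true τ)) + (u (t (Fin.cons true τ)) 0 +
          ∑ i : Fin m, (if τ i then (1 : ℝ) else -1) * u (t (Fin.cons true τ)) i.succ)) +
        (c (t (Fin.cons false τ)) + (- u (t (Fin.cons false τ)) 0 +
          ∑ i : Fin m, (if τ i then (1 : ℝ) else -1) * u (t (Fin.cons false τ)) i.succ)) ≤
        ((c p.1 + v p.1 0) + ∑ i : Fin m, (if τ i then (1 : ℝ) else -1) * u p.1 i.succ) +
        ((c p.2 - v p.2 0) + ∑ i : Fin m, (if τ i then (1 : ℝ) else -1) * u p.2 i.succ) := by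
      intro τ
      have h := huv (t (Fin.cons true τ)) (t (Fin.cons false τ)) 0
      rcases abs_cases (v (t (Fin.cons true τ)) 0 - v (t (Fin.cons false τ)) 0) with h' | h'
      · exact ⟨(t (Fin.cons true τ), t (Fin.cons false τ)), by dsimp only; linarith⟩
      · exact ⟨(t (Fin.cons false τ), t (Fin.cons true τ)), by dsimp only; linarith⟩
    choose p hp using h1
    obtain ⟨s1, hs1⟩ := ih (fun t => c t + v t 0) (fun t i => u t i.succ)
      (fun t i => v t i.succ) (fun t t' i => huv t t' i.succ) (fun τ => (p τ).1)
    obtain ⟨s2, hs2⟩ := ih (fun t => c t - v t 0) (fun t i => u t i.succ)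
      (fun t i => v t i.succ) (fun t t' i => huv t t' i.succ) (fun τ => (p τ).2)
    refine ⟨fun σ => if σ 0 then s1 (Fin.tail σ) else s2 (Fin.tail σ), ?_⟩
    rw [sum_cons_bool, sum_cons_bool]
    simp only [Fin.sum_univ_succ, Fin.cons_zero, Fin.cons_succ, Fin.tail_cons, if_true,
      Bool.false_eq_true, if_false, one_mul, neg_mul]
    have h2 := Finset.sum_le_sum (fun τ (_ : τ ∈ (univ : Finset (Fin m → Bool))) => hp τ)
    rw [Finset.sum_add_distrib (f := fun τ => (c (p τ).1 + v (p τ).1 0) + _)] at h2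
    have h3 := h2.trans (add_le_add hs1 hs2)
    rw [← Finset.sum_add_distrib] at h3
    refine le_of_le_of_eq (le_of_eq_of_le ?_ h3) ?_
    · refine Finset.sum_congr rfl fun τ _ => ?_
      simp [ite_mul]
    · refine Finset.sum_congr rfl fun τ _ => ?_
      simp [ite_mul]
      ring

/-- Every selection from `A` has total correlation at most `w`. -/
def SelBd {m : ℕ} (A : Set (Fin m → ℝ)) (w : ℝ) : Prop :=
  ∀ f : (Fin m → Bool) → (Fin m → ℝ), (∀ σ, f σ ∈ A) →
    ∑ σ, ∑ i, (if σ i then (1 : ℝ) else -1) * f σ i ≤ w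

lemma selBd_op {m : ℕ} {A B : Set (Fin m → ℝ)} {w z : ℝ} (hA : SelBd A w) (hB : SelBd B z)
    (op : ℝ → ℝ → ℝ) (φ : ℝ → ℝ) (hop : ∀ a b, op a b = (a + b + φ (a - b)) / 2)
    (hφ : ∀ x y, φ x - φ y ≤ |x - y|) :
    SelBd {g | ∃ a ∈ A, ∃ b ∈ B, g = fun i => op (a i) (b i)} (w + z) := by
  intro f hf
  choose a ha b hb hfe using hf
  obtain ⟨s, hs⟩ := contraction (T := A × B) m (fun _ => 0)
    (fun t i => φ (t.1.1 i - t.2.1 i)) (fun t i => t.1.1 i - t.2.1 i)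
    (fun t t' i => hφ _ _) (fun σ => (⟨a σ, ha σ⟩, ⟨b σ, hb σ⟩))
  have h1 := hA a ha
  have h2 := hB b hb
  have h3 := hA (fun σ => (s σ).1.1) (fun σ => (s σ).1.2)
  have h4 := hB (fun σ => (s (fun i => !σ i)).2.1) (fun σ => (s (fun i => !σ i)).2.2)
  have e : Function.Involutive (fun (σ : Fin m → Bool) i => !σ i) := by
    intro σ; simp
  rw [← Equiv.sum_comp (e.toPerm _)] at h4
  have h5 : ∑ σ, ∑ i, (if σ i then (1 : ℝ) else -1) * (-(s σ).2.1 i) ≤ z := by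
    refine le_of_eq_of_le (Finset.sum_congr rfl fun σ _ => Finset.sum_congr rfl fun i _ => ?_) h4
    cases h : σ i <;> simp [h]
  have h6 : ∑ σ, ∑ i, (if σ i then (1 : ℝ) else -1) * f σ i =
      ((∑ σ, ∑ i, (if σ i then (1 : ℝ) else -1) * a σ i) +
       (∑ σ, ∑ i, (if σ i then (1 : ℝ) else -1) * b σ i) +
       ∑ σ, ∑ i, (if σ i then (1 : ℝ) else -1) * φ (a σ i - b σ i)) / 2 := by
    simp only [← Finset.sum_add_distrib, Finset.sum_div]
    refine Finset.sum_congr rfl fun σ _ => Finset.sum_congr rfl fun i _ => ?_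
    rw [hfe σ]; simp only [hop]; ring
  have h7 : ∑ σ, ∑ i, (if σ i then (1 : ℝ) else -1) * ((s σ).1.1 i - (s σ).2.1 i) =
      (∑ σ, ∑ i, (if σ i then (1 : ℝ) else -1) * (s σ).1.1 i) +
      ∑ σ, ∑ i, (if σ i then (1 : ℝ) else -1) * (-(s σ).2.1 i) := by
    simp only [← Finset.sum_add_distrib]
    refine Finset.sum_congr rfl fun σ _ => Finset.sum_congr rfl fun i _ => ?_
    ring
  simp only [zero_add] at hs
  rw [h7] at hs
  rw [h6]
  linarith

lemma max_form (a b : ℝ) : max a b = (a + b + |a - b|) / 2 := by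
  rcases le_total a b with h | h
  · rw [max_eq_right h, abs_of_nonpos (by linarith)]; ring
  · rw [max_eq_left h, abs_of_nonneg (by linarith)]; ring

lemma min_form (a b : ℝ) : min a b = (a + b + -|a - b|) / 2 := by
  rcases le_total a b with h | h
  · rw [min_eq_left h, abs_of_nonpos (by linarith)]; ring
  · rw [min_eq_right h, abs_of_nonneg (by linarith)]; ring

lemma selBd_sup {m l : ℕ} (A : Fin l → Set (Fin m → ℝ)) (w : Fin l → ℝ)
    (hA : ∀ j, SelBd (A j) (w j)) (s : Finset (Fin l)) (hs : s.Nonempty) :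
    SelBd {g | ∃ h : Fin l → (Fin m → ℝ), (∀ j, h j ∈ A j) ∧
      g = fun i => s.sup' hs fun j => h j i} (∑ j ∈ s, w j) := by
  induction hs using Finset.Nonempty.cons_induction with
  | singleton a =>
    intro f hf
    rw [Finset.sum_singleton]
    refine hA a f fun σ => ?_
    obtain ⟨h, hh, e⟩ := hf σ
    rw [e]; simpa using hh a
  | cons a s ha hs ih =>
    intro f hf
    rw [Finset.sum_cons]
    refine selBd_op (hA a) ih max (fun x => |x|) max_form (fun x y => abs_sub_abs_le_abs_sub x y)
      f fun σ => ?_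
    obtain ⟨h, hh, e⟩ := hf σ
    refine ⟨h a, hh a, _, ⟨h, hh, rfl⟩, ?_⟩
    rw [e]; funext i; rw [Finset.sup'_cons hs]

lemma selBd_inf {m l : ℕ} (A : Fin l → Set (Fin m → ℝ)) (w : Fin l → ℝ)
    (hA : ∀ j, SelBd (A j) (w j)) (s : Finset (Fin l)) (hs : s.Nonempty) :
    SelBd {g | ∃ h : Fin l → (Fin m → ℝ), (∀ j, h j ∈ A j) ∧
      g = fun i => s.inf' hs fun j => h j i} (∑ j ∈ s, w j) := by
  induction hs using Finset.Nonempty.cons_induction with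
  | singleton a =>
    intro f hf
    rw [Finset.sum_singleton]
    refine hA a f fun σ => ?_
    obtain ⟨h, hh, e⟩ := hf σ
    rw [e]; simpa using hh a
  | cons a s ha hs ih =>
    intro f hf
    rw [Finset.sum_cons]
    refine selBd_op (hA a) ih min (fun x => -|x|) min_form (fun x y => ?_) f fun σ => ?_
    · have := abs_sub_abs_le_abs_sub y x
      rw [abs_sub_comm] at this
      linarith
    obtain ⟨h, hh, e⟩ := hf σ
    refine ⟨h a, hh a, _, ⟨h, hh, rfl⟩, ?_⟩
    rw [e]; funext i; rw [Finset.inf'_cons hs]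

/-- From selections back to suprema. -/
lemma sum_sSup_le {ι : Type*} [Fintype ι] (A : ι → Set ℝ) (hne : ∀ i, (A i).Nonempty) (w : ℝ)
    (h : ∀ f : ι → ℝ, (∀ i, f i ∈ A i) → ∑ i, f i ≤ w) : ∑ i, sSup (A i) ≤ w := by
  refine le_of_forall_pos_le_add fun ε hε => ?_
  have hc : (0 : ℝ) < Fintype.card ι + 1 := by positivity
  have h1 : ∀ i, ∃ x ∈ A i, sSup (A i) - ε / (Fintype.card ι + 1) < x := fun i =>
    exists_lt_of_lt_csSup (hne i) (by have := div_pos hε hc; linarith)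
  choose f hf hlt using h1
  have h2 := h f hf
  have h3 := Finset.sum_le_sum (fun i (_ : i ∈ (univ : Finset ι)) => (hlt i).le)
  rw [Finset.sum_sub_distrib, Finset.sum_const, nsmul_eq_mul, Finset.card_univ] at h3
  have h4 : (Fintype.card ι : ℝ) * (ε / (Fintype.card ι + 1)) ≤ ε := by
    rw [mul_div_assoc', div_le_iff₀ hc]; nlinarith
  linarith

lemma empRad_le {X : Type*} {m l : ℕ} (S : Fin m → X) (F : Fin l → Set (X → ℝ))
    (G : Set (X → ℝ)) (hGne : G.Nonempty)
    (h : SelBd ((fun g i => g (S i)) '' G) (∑ j, ∑ σ : Fin m → Bool,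
      sSup ((fun f => ∑ i, (if σ i then (1 : ℝ) else -1) * f (S i)) '' F j))) :
    empRad S G ≤ ∑ j, empRad S (F j) := by
  unfold empRad
  rw [← Finset.sum_div]
  refine div_le_div_of_nonneg_right ?_ (by positivity)
  refine sum_sSup_le _ (fun σ => hGne.image _) _ fun f hf => ?_
  choose g hg hgf using hf
  have := h (fun σ i => g σ (S i)) (fun σ => ⟨g σ, hg σ, rfl⟩)
  refine le_of_eq_of_le (Finset.sum_congr rfl fun σ _ => ?_) this
  exact (hgf σ).symm

/-- Lemma 9.1 of Mohri et al.: the empirical Rademacher complexity of the class of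
pointwise maxima (and of pointwise minima) of `l` hypothesis classes is at most the
sum of the empirical Rademacher complexities of the classes. -/
theorem rad_max_min {X : Type*} {m l : ℕ} (hl : 0 < l) (S : Fin m → X)
    (F : Fin l → Set (X → ℝ))
    (hne : ∀ j, (F j).Nonempty)
    (hbdd : ∀ j (σ : Fin m → Bool),
      BddAbove ((fun f => ∑ i, (if σ i then (1 : ℝ) else -1) * f (S i)) '' F j))
    (G Gmin : Set (X → ℝ))
    (hG : G = {g | ∃ h : Fin l → (X → ℝ), (∀ j, h j ∈ F j) ∧
        g = fun x => univ.sup' ⟨⟨0, hl⟩, mem_univ _⟩ fun j => h j x})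
    (hGmin : Gmin = {g | ∃ h : Fin l → (X → ℝ), (∀ j, h j ∈ F j) ∧
        g = fun x => univ.inf' ⟨⟨0, hl⟩, mem_univ _⟩ fun j => h j x})
    (hbddG : ∀ σ : Fin m → Bool,
      BddAbove ((fun f => ∑ i, (if σ i then (1 : ℝ) else -1) * f (S i)) '' G))
    (hbddGmin : ∀ σ : Fin m → Bool,
      BddAbove ((fun f => ∑ i, (if σ i then (1 : ℝ) else -1) * f (S i)) '' Gmin)) :
    empRad S G ≤ ∑ j, empRad S (F j) ∧ empRad S Gmin ≤ ∑ j, empRad S (F j) := by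
  have hA : ∀ j, SelBd ((fun g i => g (S i)) '' F j) (∑ σ : Fin m → Bool,
      sSup ((fun f => ∑ i, (if σ i then (1 : ℝ) else -1) * f (S i)) '' F j)) := by
    intro j f hf
    refine Finset.sum_le_sum fun σ _ => le_csSup (hbdd j σ) ?_
    obtain ⟨g, hg, e⟩ := hf σ
    exact ⟨g, hg, by rw [← e]⟩
  choose h0 hh0 using hne
  constructor
  · refine empRad_le S F G ⟨_, by rw [hG]; exact ⟨h0, hh0, rfl⟩⟩ fun f hf => ?_
    refine selBd_sup _ _ hA univ ⟨⟨0, hl⟩, mem_univ _⟩ f fun σ => ?_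
    obtain ⟨g, hg, e⟩ := hf σ
    rw [hG] at hg
    obtain ⟨h, hh, rfl⟩ := hg
    exact ⟨fun j i => h j (S i), fun j => ⟨h j, hh j, rfl⟩, e.symm⟩
  · refine empRad_le S F Gmin ⟨_, by rw [hGmin]; exact ⟨h0, hh0, rfl⟩⟩ fun f hf => ?_
    refine selBd_inf _ _ hA univ ⟨⟨0, hl⟩, mem_univ _⟩ f fun σ => ?_
    obtain ⟨g, hg, e⟩ := hf σ
    rw [hGmin] at hg
    obtain ⟨h, hh, rfl⟩ := hg
    exact ⟨fun j i => h j (S i), fun j => ⟨h j, hh j, rfl⟩, e.symm⟩
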